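/- arXiv:2308.07542 — 7 statements merged into one kernel-verified Lean document; each statement's English description precedes it below -/
import Mathlib

section
/- Let a₁, a₂ be positive real numbers such that a₂/a₁ is irrational. Let (i⁺₁,…,i⁺_{k⁺}), (j⁺₁,…,j⁺_{l⁺}), (i⁻₁,…,i⁻_{k⁻}), (j⁻₁,…,j⁻_{l⁻}) be (possibly empty) finite tuples of positive integers, not all four empty. Define the energy E := a₁·(i⁺₁+…+i⁺_{k⁺}) + a₂·(j⁺₁+…+j⁺_{l⁺}) − a₁·(i⁻₁+…+i⁻_{k⁻}) − a₂·(j⁻₁+…+j⁻_{l⁻}), and the index ind := −(2 − k⁺ − l⁺ − k⁻ − l⁻) + Σ_s (1 + 2·i⁺_s + 2·⌊i⁺_s·a₁/a₂⌋) + Σ_s (1 + 2·j⁺_s + 2·⌊j⁺_s·a₂/a₁⌋) − Σ_s (1 + 2·i⁻_s + 2·⌊i⁻_s·a₁/a₂⌋) − Σ_s (1 + 2·j⁻_s + 2·⌊j⁻_s·a₂/a₁⌋). If E ≥ 0, then ind ≥ 0; moreover, if E > 0, then ind ≥ 2. -/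
/-- Energy of a genus-zero formal curve in the symplectization of `∂E(a₁,a₂)`,
whose positive ends are covers `ν₁^{i}` for `i ∈ iP` and `ν₂^{j}` for `j ∈ jP`,
and whose negative ends are covers `ν₁^{i}` for `i ∈ iM` and `ν₂^{j}` for `j ∈ jM`.
The action of `ν₁^i` is `i·a₁` and that of `ν₂^j` is `j·a₂`. -/
noncomputable def formalEnergy (a₁ a₂ : ℝ) (iP jP iM jM : List ℕ) : ℝ :=
    a₁ * ((iP.map (fun i => (i : ℝ))).sum)
  + a₂ * ((jP.map (fun j => (j : ℝ))).sum)
  - a₁ * ((iM.map (fun i => (i : ℝ))).sum)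
  - a₂ * ((jM.map (fun j => (j : ℝ))).sum)

/-- Fredholm index of the above formal curve (with `n = 2`), using
`CZ(ν₁^i) = 1 + 2i + 2⌊i·a₁/a₂⌋` and `CZ(ν₂^j) = 1 + 2j + 2⌊j·a₂/a₁⌋`:
`ind = -(2 - #ends) + ΣCZ(positive ends) - ΣCZ(negative ends)`. -/
noncomputable def formalIndex (a₁ a₂ : ℝ) (iP jP iM jM : List ℕ) : ℤ :=
    -(2 - ((iP.length + jP.length + iM.length + jM.length : ℕ) : ℤ))
  + ((iP.map (fun i => (1 : ℤ) + 2 * (i : ℤ) + 2 * ⌊(i : ℝ) * a₁ / a₂⌋)).sum)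
  + ((jP.map (fun j => (1 : ℤ) + 2 * (j : ℤ) + 2 * ⌊(j : ℝ) * a₂ / a₁⌋)).sum)
  - ((iM.map (fun i => (1 : ℤ) + 2 * (i : ℤ) + 2 * ⌊(i : ℝ) * a₁ / a₂⌋)).sum)
  - ((jM.map (fun j => (1 : ℤ) + 2 * (j : ℤ) + 2 * ⌊(j : ℝ) * a₂ / a₁⌋)).sum)

/-- Decomposition of the sum of Conley-Zehnder indices of a list of covers. -/
theorem cz_sum_data (a b : ℝ) (L : List ℕ) : ∃ S F : ℤ,
    (L.map (fun i => (1 : ℤ) + 2 * (i : ℤ) + 2 * ⌊(i : ℝ) * a / b⌋)).sum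
      = L.length + 2 * S + 2 * F ∧
    (L.map (fun i => (i : ℝ))).sum = (S : ℝ) ∧
    (F : ℝ) ≤ S * (a / b) ∧ (S : ℝ) * (a / b) ≤ F + L.length ∧
    (L ≠ [] → (S : ℝ) * (a / b) < F + L.length) ∧
    0 ≤ S ∧ ((∀ x ∈ L, 1 ≤ x) → L ≠ [] → 1 ≤ S) := by
  induction L with
  | nil => exact ⟨0, 0, by simp⟩
  | cons x L ih =>
    obtain ⟨S, F, h1, h2, h3, h4, -, h6, -⟩ := ih
    have f1 := Int.floor_le ((x : ℝ) * a / b)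
    have f2 := Int.lt_floor_add_one ((x : ℝ) * a / b)
    have e : (x : ℝ) * a / b = x * (a / b) := by ring
    have hlt : (((x : ℤ) + S : ℤ) : ℝ) * (a / b)
        < ((⌊(x : ℝ) * a / b⌋ + F : ℤ) : ℝ) + ((x :: L).length : ℕ) := by
      push_cast [List.length_cons]
      rw [add_mul]
      linarith
    refine ⟨x + S, ⌊(x : ℝ) * a / b⌋ + F, ?_, ?_, ?_, hlt.le, fun _ => hlt, by omega, ?_⟩
    · simp only [List.bind_eq_flatMap, List.pure_def, List.flatMap_cons, List.map_append,
        List.map_cons, List.map_nil, List.sum_append, List.sum_cons, List.sum_nil,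
        Int.cast_natCast] at h1 ⊢
      rw [h1, List.length_cons]
      push_cast
      ring
    · simp only [List.bind_eq_flatMap, List.pure_def, List.flatMap_cons, List.map_append,
        List.map_cons, List.map_nil, List.sum_append, List.sum_cons, List.sum_nil] at h2 ⊢
      rw [h2]
      push_cast
      ring
    · push_cast
      rw [add_mul]
      linarith
    · intro h _
      have := h x (by simp)
      omega

/-- If the energy of a nontrivial genus-zero formal curve in `∂E(a₁,a₂)` is
nonnegative then its index is nonnegative; if the energy is strictly positive
then its index is at least `2`. -/
theorem index_nonneg_of_energy_nonneg
    (a₁ a₂ : ℝ) (ha₁ : 0 < a₁) (ha₂ : 0 < a₂) (hirr : Irrational (a₂ / a₁))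
    (iP jP iM jM : List ℕ)
    (hiP : ∀ x ∈ iP, 1 ≤ x) (hjP : ∀ x ∈ jP, 1 ≤ x)
    (hiM : ∀ x ∈ iM, 1 ≤ x) (hjM : ∀ x ∈ jM, 1 ≤ x)
    (hne : ¬(iP = [] ∧ jP = [] ∧ iM = [] ∧ jM = [])) :
    (0 ≤ formalEnergy a₁ a₂ iP jP iM jM → 0 ≤ formalIndex a₁ a₂ iP jP iM jM) ∧
    (0 < formalEnergy a₁ a₂ iP jP iM jM → 2 ≤ formalIndex a₁ a₂ iP jP iM jM) := by
  obtain ⟨S1, F1, c1, s1, l1, u1, t1, n1, p1⟩ := cz_sum_data a₁ a₂ iP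
  obtain ⟨S2, F2, c2, s2, l2, u2, t2, n2, p2⟩ := cz_sum_data a₂ a₁ jP
  obtain ⟨S3, F3, c3, s3, l3, u3, t3, n3, p3⟩ := cz_sum_data a₁ a₂ iM
  obtain ⟨S4, F4, c4, s4, l4, u4, t4, n4, p4⟩ := cz_sum_data a₂ a₁ jM
  have hE : formalEnergy a₁ a₂ iP jP iM jM = a₁ * S1 + a₂ * S2 - a₁ * S3 - a₂ * S4 := by
    rw [formalEnergy, s1, s2, s3, s4]
  have hE1 : formalEnergy a₁ a₂ iP jP iM jM / a₂
      = (S1 : ℝ) * (a₁ / a₂) - S3 * (a₁ / a₂) + S2 - S4 := by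
    rw [hE]; field_simp; ring
  have hE2 : formalEnergy a₁ a₂ iP jP iM jM / a₁
      = (S2 : ℝ) * (a₂ / a₁) - S4 * (a₂ / a₁) + S1 - S3 := by
    rw [hE]; field_simp; ring
  rw [formalIndex, c1, c2, c3, c4]
  generalize formalEnergy a₁ a₂ iP jP iM jM = E at *
  constructor
  · intro h
    have d1 : 0 ≤ E / a₂ := div_nonneg h ha₂.le
    have d2 : 0 ≤ E / a₁ := div_nonneg h ha₁.le
    have g1 : S4 - S2 ≤ F1 + iP.length - F3 := by
      have : ((S4 - S2 : ℤ) : ℝ) ≤ ((F1 + iP.length - F3 : ℤ) : ℝ) := by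
        push_cast; linarith
      exact_mod_cast this
    have g2 : S3 - S1 ≤ F2 + jP.length - F4 := by
      have : ((S3 - S1 : ℤ) : ℝ) ≤ ((F2 + jP.length - F4 : ℤ) : ℝ) := by
        push_cast; linarith
      exact_mod_cast this
    by_cases hi : iP = []
    · by_cases hj : jP = []
      · exfalso
        subst hi hj
        have z1 : S1 = 0 := by simpa [eq_comm] using s1
        have z2 : S2 = 0 := by simpa [eq_comm] using s2
        subst z1 z2
        have q3 : (0 : ℝ) ≤ S3 := by exact_mod_cast n3
        have q4 : (0 : ℝ) ≤ S4 := by exact_mod_cast n4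
        have m3 := mul_nonneg ha₁.le q3
        have m4 := mul_nonneg ha₂.le q4
        push_cast at hE
        by_cases k3 : iM = []
        · by_cases k4 : jM = []
          · exact hne ⟨rfl, rfl, k3, k4⟩
          · have r : (1 : ℝ) ≤ S4 := by exact_mod_cast p4 hjM k4
            have := mul_pos ha₂ (by linarith : (0 : ℝ) < S4)
            linarith
        · have r : (1 : ℝ) ≤ S3 := by exact_mod_cast p3 hiM k3
          have := mul_pos ha₁ (by linarith : (0 : ℝ) < S3)
          linarith
      · have t := t2 hj
        have g : S3 - S1 < F2 + jP.length - F4 := by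
          have : ((S3 - S1 : ℤ) : ℝ) < ((F2 + jP.length - F4 : ℤ) : ℝ) := by
            push_cast; linarith
          exact_mod_cast this
        push_cast; linarith
    · have t := t1 hi
      have g : S4 - S2 < F1 + iP.length - F3 := by
        have : ((S4 - S2 : ℤ) : ℝ) < ((F1 + iP.length - F3 : ℤ) : ℝ) := by
          push_cast; linarith
        exact_mod_cast this
      push_cast; linarith
  · intro h
    have d1 : 0 < E / a₂ := div_pos h ha₂
    have d2 : 0 < E / a₁ := div_pos h ha₁
    have g1 : S4 - S2 < F1 + iP.length - F3 := by
      have : ((S4 - S2 : ℤ) : ℝ) < ((F1 + iP.length - F3 : ℤ) : ℝ) := by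
        push_cast; linarith
      exact_mod_cast this
    have g2 : S3 - S1 < F2 + jP.length - F4 := by
      have : ((S3 - S1 : ℤ) : ℝ) < ((F2 + jP.length - F4 : ℤ) : ℝ) := by
        push_cast; linarith
      exact_mod_cast this
    push_cast; linarith
end

section
/- Let a₁, a₂ be positive real numbers such that a₂/a₁ is irrational. Then for every integer k ≥ 2 and all positive integers i₁,…,i_k, one has M^{(a₁,a₂)}_{i₁} + ⋯ + M^{(a₁,a₂)}_{i_k} ≤ M^{(a₁,a₂)}_{i₁+⋯+i_k+k−1}. -/
/-- `ellM a k` is the `k`-th smallest element, counted with multiplicity, of the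
multiset `{i · a_j : i ∈ ℤ_{≥1}, 1 ≤ j ≤ n}` (for `a` a tuple of positive reals):
it is the least real `x` such that at least `k` pairs `(j, i)` with `i ≥ 1`
satisfy `i · a_j ≤ x`. -/
noncomputable def ellM {n : ℕ} (a : Fin n → ℝ) (k : ℕ) : ℝ :=
  sInf {x : ℝ | k ≤ Nat.card {p : Fin n × ℕ // ((p.2 : ℝ) + 1) * a p.1 ≤ x}}

lemma ellM_count (a b x : ℝ) (ha : 0 < a) (hb : 0 < b) :
    Nat.card {p : Fin 2 × ℕ // ((p.2 : ℝ) + 1) * (![a, b] : Fin 2 → ℝ) p.1 ≤ x}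
      = ⌊x / a⌋₊ + ⌊x / b⌋₊ := by
  have key : ∀ (c : ℝ), 0 < c → ∀ m : ℕ, m < ⌊x / c⌋₊ ↔ ((m : ℝ) + 1) * c ≤ x := by
    intro c hc m
    rw [← Nat.succ_le_iff, Nat.le_floor_iff' (Nat.succ_ne_zero m), le_div_iff₀ hc]
    push_cast
    rfl
  rw [Nat.subtype_card (({0} ×ˢ Finset.range ⌊x / a⌋₊) ∪ ({1} ×ˢ Finset.range ⌊x / b⌋₊))]
  · rw [Finset.card_union_of_disjoint]
    · simp
    · rw [Finset.disjoint_left]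
      rintro ⟨p, m⟩ h1 h2
      simp only [Finset.mem_product, Finset.mem_singleton] at h1 h2
      exact absurd (h1.1.symm.trans h2.1) (by decide)
  · rintro ⟨p, m⟩
    fin_cases p
    · simp [key a ha]
    · simp [key b hb]

lemma ellM_eq (a b : ℝ) (ha : 0 < a) (hb : 0 < b) (k : ℕ) :
    ellM ![a, b] k = sInf {x : ℝ | k ≤ ⌊x / a⌋₊ + ⌊x / b⌋₊} := by
  unfold ellM
  simp only [ellM_count a b _ ha hb]

lemma ellM_set_lower (a b : ℝ) (ha : 0 < a) (hb : 0 < b) (k : ℕ) (hk : 1 ≤ k) (x : ℝ)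
    (hx : k ≤ ⌊x / a⌋₊ + ⌊x / b⌋₊) : min a b ≤ x := by
  by_contra! h
  obtain ⟨h1, h2⟩ := lt_min_iff.1 h
  have e1 : ⌊x / a⌋₊ < 1 := (Nat.floor_lt' one_ne_zero).2 (by
    rw [div_lt_iff₀ ha]; simpa using h1)
  have e2 : ⌊x / b⌋₊ < 1 := (Nat.floor_lt' one_ne_zero).2 (by
    rw [div_lt_iff₀ hb]; simpa using h2)
  omega

lemma ellM_set_nonempty (a b : ℝ) (ha : 0 < a) (k : ℕ) :
    {x : ℝ | k ≤ ⌊x / a⌋₊ + ⌊x / b⌋₊}.Nonempty := by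
  refine ⟨k * a, ?_⟩
  have : (k : ℝ) * a / a = k := by field_simp
  simp [this]

lemma ellM_pos (a b : ℝ) (ha : 0 < a) (hb : 0 < b) (k : ℕ) (hk : 1 ≤ k) :
    0 < ellM ![a, b] k := by
  rw [ellM_eq a b ha hb]
  exact lt_of_lt_of_le (lt_min ha hb) (le_csInf (ellM_set_nonempty a b ha k)
    (fun x hx => ellM_set_lower a b ha hb k hk x hx))

lemma ellM_lt (a b : ℝ) (ha : 0 < a) (hb : 0 < b) (k : ℕ) (hk : 1 ≤ k) (y : ℝ)
    (hy : y < ellM ![a, b] k) : ⌊y / a⌋₊ + ⌊y / b⌋₊ < k := by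
  rw [ellM_eq a b ha hb] at hy
  by_contra! h
  have := csInf_le (s := {x : ℝ | k ≤ ⌊x / a⌋₊ + ⌊x / b⌋₊})
    ⟨min a b, fun x hx => ellM_set_lower a b ha hb k hk x hx⟩ h
  linarith

lemma floor_add_le_aux (c y z : ℝ) (hc : 0 < c) (hy : 0 ≤ y) (hz : 0 ≤ z) :
    ⌊(y + z) / c⌋₊ ≤ ⌊y / c⌋₊ + ⌊z / c⌋₊ + 1 := by
  have h1 := Nat.lt_floor_add_one (y / c)
  have h2 := Nat.lt_floor_add_one (z / c)
  have : ⌊(y + z) / c⌋₊ < ⌊y / c⌋₊ + ⌊z / c⌋₊ + 2 := by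
    rw [Nat.floor_lt (by positivity), add_div]
    push_cast
    linarith
  omega

lemma ellM_add (a b : ℝ) (ha : 0 < a) (hb : 0 < b) (i j : ℕ) (hi : 1 ≤ i) (hj : 1 ≤ j) :
    ellM ![a, b] i + ellM ![a, b] j ≤ ellM ![a, b] (i + j + 1) := by
  rw [ellM_eq a b ha hb (i + j + 1)]
  refine le_csInf (ellM_set_nonempty a b ha _) (fun x hx => ?_)
  have hx0 : 0 < x := lt_of_lt_of_le (lt_min ha hb)
    (ellM_set_lower a b ha hb _ (by omega) x hx)
  have pi := ellM_pos a b ha hb i hi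
  have pj := ellM_pos a b ha hb j hj
  have li := ellM_lt a b ha hb i hi
  have lj := ellM_lt a b ha hb j hj
  generalize ellM ![a, b] i = P at *
  generalize ellM ![a, b] j = Q at *
  by_contra! h
  have ht : x / (P + Q) < 1 := (div_lt_one (by positivity)).2 h
  have ht0 : 0 < x / (P + Q) := by positivity
  have e : x = x / (P + Q) * P + x / (P + Q) * Q := by field_simp
  have h1 := li (x / (P + Q) * P) (by nlinarith)
  have h2 := lj (x / (P + Q) * Q) (by nlinarith)
  have f1 := floor_add_le_aux a (x / (P + Q) * P) (x / (P + Q) * Q) ha (by positivity)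
    (by positivity)
  have f2 := floor_add_le_aux b (x / (P + Q) * P) (x / (P + Q) * Q) hb (by positivity)
    (by positivity)
  rw [← e] at f1 f2
  simp only [Set.mem_setOf_eq] at hx
  omega

lemma ellM_sum (a b : ℝ) (ha : 0 < a) (hb : 0 < b) (k : ℕ) :
    ∀ i : Fin (k + 1) → ℕ, (∀ t, 1 ≤ i t) →
      (∑ t, ellM ![a, b] (i t)) ≤ ellM ![a, b] ((∑ t, i t) + k) := by
  induction k with
  | zero => intro i _; simp
  | succ k ih =>
    intro i hi
    rw [Fin.sum_univ_succ, Fin.sum_univ_succ (f := i)]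
    have h1 := ih (fun t => i t.succ) (fun t => hi _)
    have hs : 1 ≤ ∑ t : Fin (k + 1), i t.succ := by
      rw [Fin.sum_univ_succ]
      have := hi (Fin.succ 0)
      omega
    have h2 := ellM_add a b ha hb (i 0) ((∑ t : Fin (k + 1), i t.succ) + k) (hi 0) (by omega)
    have e : i 0 + ((∑ t : Fin (k + 1), i t.succ) + k) + 1
      = i 0 + (∑ t : Fin (k + 1), i t.succ) + (k + 1) := by omega
    rw [e] at h2
    linarith

/-- For `a₁, a₂ > 0` with `a₂/a₁` irrational, the sequence `M^{(a₁,a₂)}` is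
superadditive in the sense that
`M_{i₁} + ⋯ + M_{i_k} ≤ M_{i₁+⋯+i_k+k−1}` for all `k ≥ 2` and `i₁,…,i_k ≥ 1`. -/
theorem ellM_superadditive_dim_two
    (a₁ a₂ : ℝ) (ha₁ : 0 < a₁) (ha₂ : 0 < a₂) (hirr : Irrational (a₂ / a₁)) :
    ∀ k : ℕ, 2 ≤ k → ∀ i : Fin k → ℕ, (∀ t, 1 ≤ i t) →
      (∑ t, ellM ![a₁, a₂] (i t)) ≤ ellM ![a₁, a₂] ((∑ t, i t) + k - 1) := by
  intro k hk i hi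
  obtain ⟨k, rfl⟩ : ∃ m, k = m + 1 := ⟨k - 1, by omega⟩
  exact ellM_sum a₁ a₂ ha₁ ha₂ k i hi
end

section
/- Let n ≥ 2, let a = (a₁,…,aₙ) be a rationally independent tuple of positive real numbers, and let c ≥ 2 be an integer. If a_s > M^{(a₁,a₂)}_{c−1} for every s with 3 ≤ s ≤ n, then Assumption A holds for (a, c): for every integer k ≥ 2 and all positive integers i₁,…,i_k with i₁+⋯+i_k+k−1 ≤ c−1, one has M^a_{i₁} + ⋯ + M^a_{i_k} ≤ M^a_{i₁+⋯+i_k+k−1}. -/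
/-- Assumption A of the paper for the data `(a, c)` (`c` playing the role of `c₁(A)`):
for every `k ≥ 2` and all `i₁,…,i_k ∈ ℤ_{≥1}` with `i₁+⋯+i_k+k−1 ≤ c−1`, one has
`M^a_{i₁} + ⋯ + M^a_{i_k} ≤ M^a_{i₁+⋯+i_k+k−1}`. -/
def AssumptionA {n : ℕ} (a : Fin n → ℝ) (c : ℕ) : Prop :=
  ∀ k : ℕ, 2 ≤ k → ∀ i : Fin k → ℕ, (∀ t, 1 ≤ i t) →
    (∑ t, i t) + k - 1 ≤ c - 1 →
    (∑ t, ellM a (i t)) ≤ ellM a ((∑ t, i t) + k - 1)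

lemma ellM_card {n : ℕ} (a : Fin n → ℝ) (hpos : ∀ s, 0 < a s) (x : ℝ) :
    Nat.card {p : Fin n × ℕ // ((p.2 : ℝ) + 1) * a p.1 ≤ x} = ∑ j, ⌊x / a j⌋₊ := by
  have key : ∀ (j : Fin n) (i : ℕ), ((i : ℝ) + 1) * a j ≤ x ↔ i < ⌊x / a j⌋₊ := by
    intro j i
    rw [← Nat.succ_le_iff, Nat.le_floor_iff' (Nat.succ_ne_zero i), le_div_iff₀ (hpos j)]
    push_cast
    rfl
  have e : {p : Fin n × ℕ // ((p.2 : ℝ) + 1) * a p.1 ≤ x} ≃ (Σ j : Fin n, Fin ⌊x / a j⌋₊) :=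
    { toFun := fun p => ⟨p.1.1, ⟨p.1.2, (key _ _).1 p.2⟩⟩
      invFun := fun q => ⟨(q.1, q.2.1), (key _ _).2 q.2.2⟩
      left_inv := fun p => rfl
      right_inv := fun q => rfl }
  rw [Nat.card_congr e]
  simp

lemma ellM_eq_s3 {n : ℕ} (a : Fin n → ℝ) (hpos : ∀ s, 0 < a s) (k : ℕ) :
    ellM a k = sInf {x : ℝ | k ≤ ∑ j, ⌊x / a j⌋₊} := by
  unfold ellM
  simp only [ellM_card a hpos]

lemma ellM_bdd {n : ℕ} (a : Fin n → ℝ) (hpos : ∀ s, 0 < a s) (k : ℕ) (hk : 1 ≤ k) :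
    BddBelow {x : ℝ | k ≤ ∑ j, ⌊x / a j⌋₊} := by
  refine ⟨0, fun x hx => ?_⟩
  by_contra h
  push Not at h
  have : ∑ j, ⌊x / a j⌋₊ = 0 := Finset.sum_eq_zero fun j _ =>
    Nat.floor_of_nonpos (div_nonpos_of_nonpos_of_nonneg h.le (hpos j).le)
  simp only [Set.mem_ofPred_eq] at hx
  omega

lemma ellM_ne {n : ℕ} (a : Fin n → ℝ) (hpos : ∀ s, 0 < a s) (hn : 0 < n) (k : ℕ) :
    {x : ℝ | k ≤ ∑ j, ⌊x / a j⌋₊}.Nonempty := by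
  refine ⟨k * a ⟨0, hn⟩, ?_⟩
  have h := Finset.single_le_sum (f := fun j => ⌊(k * a ⟨0, hn⟩) / a j⌋₊)
    (fun j _ => Nat.zero_le _) (Finset.mem_univ (⟨0, hn⟩ : Fin n))
  have h2 : (k * a ⟨0, hn⟩) / a ⟨0, hn⟩ = k := by
    have := (hpos ⟨0, hn⟩).ne'
    field_simp
  simp only [h2, Nat.floor_natCast] at h
  exact h

lemma ellM_ceil (b : Fin 2 → ℝ) (hpos : ∀ s, 0 < b s) (i : ℕ) (hi : 1 ≤ i) :
    ⌈ellM b i / b 0⌉₊ + ⌈ellM b i / b 1⌉₊ ≤ i + 1 := by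
  set y := ellM b i with hy
  by_contra hcon
  push Not at hcon
  have hypos : 0 < y := by
    by_contra h
    push Not at h
    have h0 := Nat.ceil_eq_zero.2 (div_nonpos_of_nonpos_of_nonneg h (hpos 0).le)
    have h1 := Nat.ceil_eq_zero.2 (div_nonpos_of_nonpos_of_nonneg h (hpos 1).le)
    omega
  have hp : 0 < ⌈y / b 0⌉₊ := Nat.ceil_pos.2 (div_pos hypos (hpos 0))
  have hq : 0 < ⌈y / b 1⌉₊ := Nat.ceil_pos.2 (div_pos hypos (hpos 1))
  obtain ⟨p, hp'⟩ := Nat.exists_eq_succ_of_ne_zero hp.ne'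
  obtain ⟨q, hq'⟩ := Nat.exists_eq_succ_of_ne_zero hq.ne'
  have h0 : (p : ℝ) * b 0 < y := by
    rw [← lt_div_iff₀ (hpos 0)]; exact Nat.lt_ceil.1 (by omega)
  have h1 : (q : ℝ) * b 1 < y := by
    rw [← lt_div_iff₀ (hpos 1)]; exact Nat.lt_ceil.1 (by omega)
  have hle : y ≤ max (p * b 0) (q * b 1) := by
    rw [hy, ellM_eq_s3 b hpos]
    refine csInf_le (ellM_bdd b hpos i hi) ?_
    simp only [Set.mem_ofPred_eq, Fin.sum_univ_two]
    have e0 : p ≤ ⌊max (p * b 0) (q * b 1) / b 0⌋₊ :=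
      Nat.le_floor (by rw [le_div_iff₀ (hpos 0)]; exact le_max_left _ _)
    have e1 : q ≤ ⌊max (p * b 0) (q * b 1) / b 1⌋₊ :=
      Nat.le_floor (by rw [le_div_iff₀ (hpos 1)]; exact le_max_right _ _)
    omega
  exact absurd (max_lt h0 h1) (not_lt.2 hle)

lemma floor_lt_sum (b x : ℝ) (hb : 0 < b) (hx : 0 ≤ x) {k : ℕ} (y : Fin k → ℝ)
    (h : x < ∑ t, y t) : ⌊x / b⌋₊ < ∑ t, ⌈y t / b⌉₊ := by
  rw [Nat.floor_lt (div_nonneg hx hb.le)]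
  push_cast
  calc x / b < (∑ t, y t) / b := by gcongr
    _ = ∑ t, y t / b := Finset.sum_div _ _ _
    _ ≤ _ := Finset.sum_le_sum fun t _ => Nat.le_ceil _

lemma ellM_two (b : Fin 2 → ℝ) (hpos : ∀ s, 0 < b s) (k : ℕ) (hk : 2 ≤ k)
    (i : Fin k → ℕ) (hi : ∀ t, 1 ≤ i t) :
    (∑ t, ellM b (i t)) ≤ ellM b ((∑ t, i t) + k - 1) := by
  rw [ellM_eq_s3 b hpos (_ + _ - _)]
  refine le_csInf (ellM_ne b hpos two_pos _) fun x hx => ?_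
  simp only [Set.mem_ofPred_eq, Fin.sum_univ_two] at hx
  by_contra hcon
  push Not at hcon
  have hx0 : 0 ≤ x := by
    by_contra h
    push Not at h
    have h0 := Nat.floor_of_nonpos (div_nonpos_of_nonpos_of_nonneg h.le (hpos 0).le)
    have h1 := Nat.floor_of_nonpos (div_nonpos_of_nonpos_of_nonneg h.le (hpos 1).le)
    omega
  have h0 := floor_lt_sum (b 0) x (hpos 0) hx0 _ hcon
  have h1 := floor_lt_sum (b 1) x (hpos 1) hx0 _ hcon
  have h2 : ∑ t, (⌈ellM b (i t) / b 0⌉₊ + ⌈ellM b (i t) / b 1⌉₊) ≤ ∑ t, (i t + 1) :=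
    Finset.sum_le_sum fun t _ => ellM_ceil b hpos (i t) (hi t)
  rw [Finset.sum_add_distrib, Finset.sum_add_distrib] at h2
  simp only [Finset.sum_const, Finset.card_univ, Fintype.card_fin, smul_eq_mul, mul_one] at h2
  omega

/-- If `a = (a₁,…,aₙ)` is a rationally independent tuple of positive reals with
`a_s > M^{(a₁,a₂)}_{c−1}` for all `3 ≤ s ≤ n`, then Assumption A holds for `(a, c)`. -/
theorem assumptionA_of_large_tail
    (n : ℕ) (hn : 2 ≤ n) (a : Fin n → ℝ) (hpos : ∀ s, 0 < a s)
    (hindep : LinearIndependent ℚ a)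
    (c : ℕ) (hc : 2 ≤ c)
    (hbig : ∀ s : Fin n, 2 ≤ (s : ℕ) →
      ellM (fun j : Fin 2 => a (Fin.castLE hn j)) (c - 1) < a s) :
    AssumptionA a c := by
  obtain ⟨m, rfl⟩ : ∃ m, n = m + 2 := ⟨n - 2, by omega⟩
  set b : Fin 2 → ℝ := fun j => a (Fin.castLE hn j) with hb
  have hbpos : ∀ s, 0 < b s := fun s => hpos _
  have hsum : ∀ x : ℝ, ∑ j, ⌊x / a j⌋₊
      = ∑ j, ⌊x / b j⌋₊ + ∑ j : Fin m, ⌊x / a j.succ.succ⌋₊ := by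
    intro x
    rw [Fin.sum_univ_succ, Fin.sum_univ_succ, Fin.sum_univ_two]
    exact (Nat.add_assoc _ _ _).symm
  intro k hk i hi hle
  have hup : ∀ t, ellM a (i t) ≤ ellM b (i t) := by
    intro t
    rw [ellM_eq_s3 a hpos, ellM_eq_s3 b hbpos]
    refine csInf_le_csInf (ellM_bdd a hpos _ (hi t)) (ellM_ne b hbpos two_pos _) fun x hx => ?_
    simp only [Set.mem_ofPred_eq] at hx ⊢
    rw [hsum]
    omega
  refine (Finset.sum_le_sum fun t _ => hup t).trans ((ellM_two b hbpos k hk i hi).trans ?_)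
  have hN : 1 ≤ (∑ t, i t) + k - 1 := by omega
  generalize (∑ t, i t) + k - 1 = N at hN hle
  rw [ellM_eq_s3 a hpos]
  refine le_csInf (ellM_ne a hpos (by omega) _) fun x hx => ?_
  simp only [Set.mem_ofPred_eq] at hx
  rcases lt_or_ge x (ellM b (c - 1)) with h | h
  · rw [ellM_eq_s3 b hbpos]
    refine csInf_le (ellM_bdd b hbpos _ hN) ?_
    rw [hsum] at hx
    have hz : ∑ j : Fin m, ⌊x / a j.succ.succ⌋₊ = 0 := by
      refine Finset.sum_eq_zero fun j _ => Nat.floor_eq_zero.2 ?_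
      rw [div_lt_one (hpos _)]
      exact h.trans (hbig _ (by simp))
    simp only [Set.mem_ofPred_eq]
    omega
  · refine le_trans ?_ h
    rw [ellM_eq_s3 b hbpos, ellM_eq_s3 b hbpos]
    exact csInf_le_csInf (ellM_bdd b hbpos _ hN) (ellM_ne b hbpos two_pos _)
      fun x hx => le_trans hle hx
end

section
/- Let p, q be coprime positive integers, let n ≥ 2, and let a₃,…,aₙ be real numbers with a_s > p·q for 3 ≤ s ≤ n. Then there exists δ₀ > 0 such that for every real δ with 0 < δ < δ₀ and for each choice of sign ε ∈ {+1, −1}, the tuple a = (q, p + ε·δ, a₃,…,aₙ) satisfies both Assumption A and Assumption B with c = p + q; that is: (A) for every k ≥ 2 and all positive integers i₁,…,i_k with i₁+⋯+i_k+k−1 ≤ p+q−1, one has M^a_{i₁}+⋯+M^a_{i_k} ≤ M^a_{i₁+⋯+i_k+k−1}, and (B) for every k ≥ 2 and all positive integers i₁,…,i_k with i₁+⋯+i_k+k−1 = p+q−1, one has M^a_{i₁}+⋯+M^a_{i_k} < M^a_{p+q−1}. -/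
/-- Assumption B of the paper for the data `(a, c)`: for every `k ≥ 2` and all
`i₁,…,i_k ∈ ℤ_{≥1}` with `i₁+⋯+i_k+k−1 = c−1`, one has
`M^a_{i₁} + ⋯ + M^a_{i_k} < M^a_{c−1}`. -/
def AssumptionB {n : ℕ} (a : Fin n → ℝ) (c : ℕ) : Prop :=
  ∀ k : ℕ, 2 ≤ k → ∀ i : Fin k → ℕ, (∀ t, 1 ≤ i t) →
    (∑ t, i t) + k - 1 = c - 1 →
    (∑ t, ellM a (i t)) < ellM a (c - 1)

/-- Counting function for two generators. -/
noncomputable def skewF (A B x : ℝ) : ℕ := ⌊x / A⌋₊ + ⌊x / B⌋₊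

lemma skewF_card {n : ℕ} (a : Fin n → ℝ) (j0 j1 : Fin n) (hne : j0 ≠ j1)
    (hA : 0 < a j0) (hB : 0 < a j1) (x : ℝ)
    (hx : ∀ j, j ≠ j0 → j ≠ j1 → 0 < a j ∧ x < a j) :
    Nat.card {p : Fin n × ℕ // ((p.2 : ℝ) + 1) * a p.1 ≤ x} = skewF (a j0) (a j1) x := by
  classical
  have key : ∀ (c : ℝ), 0 < c → ∀ i : ℕ, ((i : ℝ) + 1) * c ≤ x ↔ i < ⌊x / c⌋₊ := by
    intro c hc i
    rw [← Nat.succ_le_iff, Nat.le_floor_iff' (Nat.succ_ne_zero i), le_div_iff₀ hc]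
    push_cast
    rfl
  rw [Nat.subtype_card (((Finset.range ⌊x / a j0⌋₊).image (fun i => (j0, i))) ∪
    ((Finset.range ⌊x / a j1⌋₊).image (fun i => (j1, i))))]
  · rw [Finset.card_union_of_disjoint, Finset.card_image_of_injective,
      Finset.card_image_of_injective]
    · simp [skewF]
    · intro u v h; simpa using h
    · intro u v h; simpa using h
    · rw [Finset.disjoint_left]
      intro y h1 h2
      simp only [Finset.mem_image] at h1 h2
      obtain ⟨u, -, rfl⟩ := h1
      obtain ⟨v, -, h⟩ := h2
      exact hne (Prod.ext_iff.1 h).1.symm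
  · rintro ⟨j, i⟩
    simp only [Finset.mem_union, Finset.mem_image, Finset.mem_range, Prod.mk.injEq]
    by_cases h0 : j = j0
    · subst h0
      rw [key _ hA]
      constructor
      · rintro (⟨u, hu, -, rfl⟩ | ⟨u, hu, h, -⟩)
        · exact hu
        · exact absurd h.symm hne
      · intro h; exact Or.inl ⟨i, h, rfl, rfl⟩
    by_cases h1 : j = j1
    · subst h1
      rw [key _ hB]
      constructor
      · rintro (⟨u, hu, h, -⟩ | ⟨u, hu, -, rfl⟩)
        · exact absurd h hne
        · exact hu
      · intro h; exact Or.inr ⟨i, h, rfl, rfl⟩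
    obtain ⟨hp, hl⟩ := hx j h0 h1
    constructor
    · rintro (⟨u, hu, h, -⟩ | ⟨u, hu, h, -⟩)
      · exact absurd h.symm h0
      · exact absurd h.symm h1
    · intro h
      exfalso
      have : (0 : ℝ) ≤ i * a j := by positivity
      nlinarith

lemma skewF_mono {A B : ℝ} (hA : 0 < A) (hB : 0 < B) {x y : ℝ} (h : x ≤ y) :
    skewF A B x ≤ skewF A B y := by
  unfold skewF
  gcongr

lemma le_skewF {A B : ℝ} (hA : 0 < A) (hB : 0 < B) {u v : ℕ} {x : ℝ}
    (h1 : u * A ≤ x) (h2 : v * B ≤ x) : u + v ≤ skewF A B x := by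
  unfold skewF
  exact add_le_add (Nat.le_floor ((le_div_iff₀ hA).2 h1)) (Nat.le_floor ((le_div_iff₀ hB).2 h2))

lemma skew_least {A B : ℝ} (hA : 0 < A) (hB : 0 < B) {P Q : ℕ}
    (h1 : ((Q : ℝ) - 1) * B ≤ P * A) (h2 : P * A ≤ Q * B) (hQ : 0 < Q)
    (k : ℕ) (hk : 1 ≤ k) (hk' : k ≤ P + Q - 1) :
    ∃ v : ℝ, k ≤ skewF A B v ∧ (∀ x, k ≤ skewF A B x → v ≤ x) ∧ v ≤ P * A ∧
      0 < v ∧ ∃ α β : ℕ, v = α * A + β * B := by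
  classical
  have hPA : k ≤ skewF A B (P * A) := by
    have := le_skewF (u := P) (v := Q - 1) hA hB (x := P * A) le_rfl
      (by rw [Nat.cast_sub hQ]; simpa using h1)
    omega
  let g : ℕ × ℕ → ℝ := fun z => max (z.1 * A) (z.2 * B)
  have hfl : ∀ x : ℝ, k ≤ skewF A B x → g (⌊x / A⌋₊, ⌊x / B⌋₊) ≤ x ∧
      k ≤ skewF A B (g (⌊x / A⌋₊, ⌊x / B⌋₊)) := by
    intro x hx
    have hx0 : 0 ≤ x := by
      by_contra hneg
      push Not at hneg
      have e1 : ⌊x / A⌋₊ = 0 := Nat.floor_of_nonpos (div_neg_of_neg_of_pos hneg hA).le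
      have e2 : ⌊x / B⌋₊ = 0 := Nat.floor_of_nonpos (div_neg_of_neg_of_pos hneg hB).le
      simp only [skewF, e1, e2] at hx
      omega
    refine ⟨max_le ?_ ?_, ?_⟩
    · exact (le_div_iff₀ hA).1 (Nat.floor_le (by positivity))
    · exact (le_div_iff₀ hB).1 (Nat.floor_le (by positivity))
    · exact hx.trans (le_skewF hA hB (le_max_left _ _) (le_max_right _ _))
  let S : Finset (ℕ × ℕ) := (Finset.range (P + 1) ×ˢ Finset.range (Q + 1)).filter
    (fun z => k ≤ skewF A B (g z))
  have hS : ∀ x, x ≤ P * A → k ≤ skewF A B x → (⌊x / A⌋₊, ⌊x / B⌋₊) ∈ S := by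
    intro x hx hkx
    simp only [S, Finset.mem_filter, Finset.mem_product, Finset.mem_range, Nat.lt_succ_iff]
    refine ⟨⟨?_, ?_⟩, (hfl x hkx).2⟩
    · exact Nat.floor_le_of_le ((div_le_iff₀ hA).2 hx)
    · exact Nat.floor_le_of_le ((div_le_iff₀ hB).2 (hx.trans h2))
  obtain ⟨z, hz, hmin⟩ := Finset.exists_min_image S g ⟨_, hS _ le_rfl hPA⟩
  have hzk : k ≤ skewF A B (g z) := (Finset.mem_filter.1 hz).2
  have hzP : g z ≤ P * A := (hmin _ (hS _ le_rfl hPA)).trans (hfl _ hPA).1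
  refine ⟨g z, hzk, ?_, hzP, ?_, ?_⟩
  · intro x hx
    rcases le_total x (P * A) with h | h
    · exact (hmin _ (hS x h hx)).trans (hfl x hx).1
    · exact hzP.trans h
  · by_contra hneg
    push Not at hneg
    have e1 : ⌊g z / A⌋₊ = 0 := Nat.floor_of_nonpos (div_nonpos_of_nonpos_of_nonneg hneg hA.le)
    have e2 : ⌊g z / B⌋₊ = 0 := Nat.floor_of_nonpos (div_nonpos_of_nonpos_of_nonneg hneg hB.le)
    simp only [skewF, e1, e2] at hzk
    omega
  · rcases max_choice (z.1 * A) (z.2 * B) with h | h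
    · exact ⟨z.1, 0, by simp [g, h]⟩
    · exact ⟨0, z.2, by simp [g, h]⟩

lemma skew_core {n : ℕ} (a : Fin n → ℝ) (j0 j1 : Fin n) (hne : j0 ≠ j1)
    (hA : 0 < a j0) (hB : 0 < a j1) {P Q : ℕ} (hP : 0 < P) (hQ : 0 < Q)
    (hx : ∀ j, j ≠ j0 → j ≠ j1 → P * a j0 < a j)
    (h1 : ((Q : ℝ) - 1) * a j1 ≤ P * a j0) (h2 : P * a j0 ≤ Q * a j1)
    (h3 : ∀ α β : ℕ, α * a j0 + β * a j1 = P * a j0 → β = 0)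
    (h4 : ∀ c e : ℕ, 1 ≤ c → c < P → c * a j0 ≤ e * a j1 → c * Q < e * P) :
    AssumptionA a (P + Q) ∧ AssumptionB a (P + Q) := by
  set A := a j0 with hAdef
  set B := a j1 with hBdef
  have hM : ∀ k : ℕ, 1 ≤ k → k ≤ P + Q - 1 → k ≤ skewF A B (ellM a k) ∧
      (∀ x, k ≤ skewF A B x → ellM a k ≤ x) ∧ ellM a k ≤ P * A ∧ 0 < ellM a k ∧
      ∃ α β : ℕ, ellM a k = α * A + β * B := by
    intro k hk hk'
    obtain ⟨v, v1, v2, v3, v4, v5⟩ := skew_least hA hB h1 h2 hQ k hk hk'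
    have hcard : ∀ x, x ≤ P * A →
        Nat.card {p : Fin n × ℕ // ((p.2 : ℝ) + 1) * a p.1 ≤ x} = skewF A B x := by
      intro x hxx
      refine skewF_card a j0 j1 hne hA hB x ?_
      intro j e0 e1
      have := hx j e0 e1
      have h0 : (0 : ℝ) < P * A := by positivity
      exact ⟨h0.trans this, hxx.trans_lt this⟩
    have hl : IsLeast {x : ℝ | k ≤ Nat.card {p : Fin n × ℕ // ((p.2 : ℝ) + 1) * a p.1 ≤ x}} v := by
      constructor
      · show k ≤ _
        rw [hcard v v3]; exact v1
      · intro x hxk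
        by_contra hlt
        push Not at hlt
        change k ≤ _ at hxk
        rw [hcard x (hlt.le.trans v3)] at hxk
        exact absurd (v2 x hxk) (not_le.2 hlt)
    have : ellM a k = v := hl.csInf_eq
    rw [this]
    exact ⟨v1, v2, v3, v4, v5⟩
  -- the ceiling estimate
  have hceil : ∀ k : ℕ, 1 ≤ k → k ≤ P + Q - 1 →
      ⌈ellM a k / A⌉₊ + ⌈ellM a k / B⌉₊ ≤ k + 1 := by
    intro k hk hk'
    obtain ⟨v1, v2, v3, v4, -⟩ := hM k hk hk'
    set v := ellM a k
    have e0 : 0 < ⌈v / A⌉₊ := Nat.ceil_pos.2 (by positivity)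
    have g0 : 0 < ⌈v / B⌉₊ := Nat.ceil_pos.2 (by positivity)
    have e1 : ((⌈v / A⌉₊ - 1 : ℕ) : ℝ) * A < v :=
      (lt_div_iff₀ hA).1 (Nat.lt_ceil.1 (Nat.sub_lt e0 one_pos))
    have g1 : ((⌈v / B⌉₊ - 1 : ℕ) : ℝ) * B < v :=
      (lt_div_iff₀ hB).1 (Nat.lt_ceil.1 (Nat.sub_lt g0 one_pos))
    have hy := le_skewF hA hB (le_max_left _ (((⌈v / B⌉₊ - 1 : ℕ) : ℝ) * B))
      (le_max_right (((⌈v / A⌉₊ - 1 : ℕ) : ℝ) * A) _)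
    have hnot : ¬ k ≤ skewF A B
        (max (((⌈v / A⌉₊ - 1 : ℕ) : ℝ) * A) (((⌈v / B⌉₊ - 1 : ℕ) : ℝ) * B)) := by
      intro h
      exact absurd (v2 _ h) (not_le.2 (max_lt e1 g1))
    omega
  have hAA : AssumptionA a (P + Q) := by
    intro k hk i hi hle
    have hit : ∀ t, i t ≤ ∑ t, i t := fun t =>
      Finset.single_le_sum (fun _ _ => Nat.zero_le _) (Finset.mem_univ t)
    obtain ⟨v1, v2, v3, v4, -⟩ := hM (∑ t, i t + k - 1) (by omega) hle
    by_contra hlt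
    push Not at hlt
    set X := ellM a (∑ t, i t + k - 1)
    have hfloor : ∀ C : ℝ, 0 < C → ⌊X / C⌋₊ < ∑ t, ⌈ellM a (i t) / C⌉₊ := by
      intro C hC
      have b1 : (⌊X / C⌋₊ : ℝ) * C ≤ X := (le_div_iff₀ hC).1 (Nat.floor_le (by positivity))
      have b2 : ∑ t, ellM a (i t) ≤ (∑ t, (⌈ellM a (i t) / C⌉₊ : ℝ)) * C := by
        rw [Finset.sum_mul]
        exact Finset.sum_le_sum fun t _ => (div_le_iff₀ hC).1 (Nat.le_ceil _)
      have b3 := lt_of_mul_lt_mul_right (b1.trans_lt (hlt.trans_le b2)) hC.le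
      exact_mod_cast b3
    have f1 := hfloor A hA
    have f2 := hfloor B hB
    have f3 : ∑ t, (⌈ellM a (i t) / A⌉₊ + ⌈ellM a (i t) / B⌉₊) ≤ ∑ t, (i t + 1) :=
      Finset.sum_le_sum fun t _ => hceil (i t) (hi t) (by have := hit t; omega)
    rw [Finset.sum_add_distrib, Finset.sum_add_distrib] at f3
    simp at f3
    unfold skewF at v1
    omega
  refine ⟨hAA, ?_⟩
  intro k hk i hi heq
  have hit : ∀ t, i t ≤ ∑ t, i t := fun t =>
    Finset.single_le_sum (fun _ _ => Nat.zero_le _) (Finset.mem_univ t)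
  have hir : ∀ t, i t ≤ P + Q - 1 := fun t => by have := hit t; omega
  have hle := hAA k hk i hi heq.le
  rw [heq] at hle
  refine lt_of_le_of_ne hle fun hEq => ?_
  obtain ⟨v1, v2, v3, v4, -⟩ := hM (P + Q - 1) (by omega) le_rfl
  have hX : ellM a (P + Q - 1) = P * A := by
    refine le_antisymm v3 ?_
    by_contra hlt
    push Not at hlt
    have f1 : ⌊ellM a (P + Q - 1) / A⌋₊ < P :=
      (Nat.floor_lt (by positivity)).2 ((div_lt_iff₀ hA).2 hlt)
    have f2 : ⌊ellM a (P + Q - 1) / B⌋₊ < Q :=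
      (Nat.floor_lt (by positivity)).2 ((div_lt_iff₀ hB).2 (hlt.trans_le h2))
    unfold skewF at v1
    omega
  rw [hX] at hEq
  choose α β hαβ using fun t => (hM (i t) (hi t) (hir t)).2.2.2.2
  have hβ : ∑ t, β t = 0 := by
    refine h3 (∑ t, α t) (∑ t, β t) ?_
    rw [← hEq]
    push_cast
    rw [Finset.sum_mul, Finset.sum_mul, ← Finset.sum_add_distrib]
    exact Finset.sum_congr rfl fun t _ => (hαβ t).symm
  have hβ0 : ∀ t, β t = 0 := fun t => (Finset.sum_eq_zero_iff.1 hβ) t (Finset.mem_univ t)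
  have hα : ∀ t, ellM a (i t) = α t * A := fun t => by rw [hαβ t, hβ0 t]; simp
  have hαpos : ∀ t, 1 ≤ α t := by
    intro t
    have h := (hM (i t) (hi t) (hir t)).2.2.2.1
    rw [hα t] at h
    by_contra h0
    have : α t = 0 := by omega
    rw [this] at h
    simp at h
  have hαsum : ∑ t, α t = P := by
    have : (∑ t, (α t : ℝ)) * A = P * A := by
      rw [← hEq, Finset.sum_mul]
      exact Finset.sum_congr rfl fun t _ => (hα t).symm
    have := mul_right_cancel₀ hA.ne' this
    exact_mod_cast this
  have hαlt : ∀ t, α t < P := by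
    intro t
    obtain ⟨s, hs⟩ : ∃ s : Fin k, s ≠ t := by
      have : Nontrivial (Fin k) := Fin.nontrivial_iff_two_le.2 hk
      exact exists_ne t
    have := Finset.add_le_sum (f := α) (s := Finset.univ) (fun _ _ => Nat.zero_le _)
      (Finset.mem_univ s) (Finset.mem_univ t) hs
    have := hαpos s
    omega
  have hg : ∀ t, α t * Q < ⌈ellM a (i t) / B⌉₊ * P := by
    intro t
    refine h4 _ _ (hαpos t) (hαlt t) ?_
    rw [← hα t]
    exact (div_le_iff₀ hB).1 (Nat.le_ceil _)
  have hsum : (∑ t, α t) * Q < (∑ t, ⌈ellM a (i t) / B⌉₊) * P := by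
    rw [Finset.sum_mul, Finset.sum_mul]
    exact Finset.sum_lt_sum_of_nonempty ⟨⟨0, by omega⟩, Finset.mem_univ _⟩ fun t _ => hg t
  rw [hαsum, mul_comm] at hsum
  have hQlt := lt_of_mul_lt_mul_right hsum (Nat.zero_le _)
  have f3 : ∑ t, (α t + ⌈ellM a (i t) / B⌉₊) ≤ ∑ t, (i t + 1) := by
    refine Finset.sum_le_sum fun t _ => ?_
    have h := hceil (i t) (hi t) (hir t)
    have e : ⌈ellM a (i t) / A⌉₊ = α t := by
      rw [hα t, mul_div_cancel_right₀ _ hA.ne']; simp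
    omega
  rw [Finset.sum_add_distrib, Finset.sum_add_distrib, hαsum] at f3
  simp at f3
  omega

lemma skew_coprime {P Q : ℕ} (h : Nat.Coprime P Q) {c e : ℕ} (h1 : 1 ≤ c) (h2 : c < P)
    (hle : c * Q ≤ e * P) : c * Q < e * P := by
  refine lt_of_le_of_ne hle fun heq => ?_
  have : P ∣ c * Q := ⟨e, by rw [heq, mul_comm]⟩
  have := Nat.le_of_dvd (by omega) (h.dvd_of_dvd_mul_right this)
  omega

/-- For coprime `p, q ≥ 1` and `a₃,…,aₙ > pq`, the tuple `a = (q, p ± δ, a₃,…,aₙ)`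
satisfies Assumptions A and B with `c = p + q`, for all sufficiently small `δ > 0`. -/
theorem assumptionA_and_B_of_skew
    (p q : ℕ) (hp : 0 < p) (hq : 0 < q) (hcop : Nat.Coprime p q)
    (n : ℕ) (hn : 2 ≤ n) (rest : Fin n → ℝ)
    (hrest : ∀ s : Fin n, 2 ≤ (s : ℕ) → ((p : ℝ) * q) < rest s) :
    ∃ δ₀ : ℝ, 0 < δ₀ ∧ ∀ δ : ℝ, 0 < δ → δ < δ₀ → ∀ ε : ℝ, ε = 1 ∨ ε = -1 →
      AssumptionA
        (fun s : Fin n => if (s : ℕ) = 0 then (q : ℝ)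
          else if (s : ℕ) = 1 then (p : ℝ) + ε * δ else rest s) (p + q) ∧
      AssumptionB
        (fun s : Fin n => if (s : ℕ) = 0 then (q : ℝ)
          else if (s : ℕ) = 1 then (p : ℝ) + ε * δ else rest s) (p + q) := by
  have hpR : (1 : ℝ) ≤ p := by exact_mod_cast hp
  have hqR : (1 : ℝ) ≤ q := by exact_mod_cast hq
  refine ⟨1 / (p + q + 1), by positivity, ?_⟩
  intro δ hδ hδ' ε hε
  rw [lt_div_iff₀ (by positivity)] at hδ'
  have hqδ : q * δ < 1 := by nlinarith
  have hpδ : p * δ < 1 := by nlinarith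
  have hδ1 : δ < 1 := by nlinarith
  let s0 : Fin n := ⟨0, by omega⟩
  let s1 : Fin n := ⟨1, by omega⟩
  have hs : s0 ≠ s1 := by simp [s0, s1]
  rcases hε with rfl | rfl
  · apply skew_core _ s0 s1 hs (P := p) (Q := q) <;> try simp only [s0, s1, if_true, one_ne_zero, if_false, one_mul]
    · positivity
    · positivity
    · exact hp
    · exact hq
    · intro j h0 h1
      have h0' : (j : ℕ) ≠ 0 := fun h => h0 (Fin.ext h)
      have h1' : (j : ℕ) ≠ 1 := fun h => h1 (Fin.ext h)
      simp only [h0', h1', if_false]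
      exact hrest j (by omega)
    · nlinarith
    · nlinarith
    · intro α β h
      have hb : (β : ℝ) ≤ q := by
        by_contra hlt
        push Not at hlt
        have : (0 : ℝ) ≤ α * q := by positivity
        have : (0 : ℝ) ≤ β * δ := by positivity
        nlinarith
      have hbδ : (β : ℝ) * δ < 1 := by nlinarith
      have hbδ0 : (0 : ℝ) ≤ β * δ := by positivity
      have i1 : α * q + β * p ≤ p * q := by
        have : (α * q + β * p : ℝ) ≤ p * q := by linarith
        exact_mod_cast this
      have i2 : p * q < α * q + β * p + 1 := by
        have : (p * q : ℝ) < α * q + β * p + 1 := by linarith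
        exact_mod_cast this
      have i3 : α * q + β * p = p * q := by omega
      have i4 : (α * q + β * p : ℝ) = p * q := by exact_mod_cast i3
      have : (β : ℝ) * δ = 0 := by linarith
      have := (mul_eq_zero.1 this).resolve_right hδ.ne'
      exact_mod_cast this
    · intro c e hc hcp h
      refine skew_coprime hcop hc hcp ?_
      rcases le_total q e with hqe | hqe
      · calc c * q ≤ p * e := Nat.mul_le_mul hcp.le hqe
          _ = e * p := mul_comm _ _
      · have hqe' : (e : ℝ) ≤ q := by exact_mod_cast hqe
        have : (e : ℝ) * δ < 1 := by nlinarith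
        have : (c * q : ℝ) < e * p + 1 := by linarith
        have : c * q < e * p + 1 := by exact_mod_cast this
        omega
  · rw [add_comm p q]
    have hpos : 0 < (p : ℝ) - δ := by linarith
    apply skew_core _ s1 s0 hs.symm (P := q) (Q := p) <;> try simp only [s0, s1, if_true, one_ne_zero, if_false, neg_mul, one_mul, ← sub_eq_add_neg]
    · exact hpos
    · positivity
    · exact hq
    · exact hp
    · intro j h0 h1
      have h0' : (j : ℕ) ≠ 0 := fun h => h1 (Fin.ext h)
      have h1' : (j : ℕ) ≠ 1 := fun h => h0 (Fin.ext h)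
      simp only [h0', h1', if_false]
      have := hrest j (by omega)
      nlinarith
    · nlinarith
    · nlinarith
    · intro α β h
      have hb : (α : ℝ) ≤ q := by
        have : (0 : ℝ) ≤ β * q := by positivity
        exact le_of_mul_le_mul_right (by linarith) hpos
      have h0 : (0 : ℝ) ≤ α * δ := by positivity
      have h01 : (α : ℝ) * δ ≤ q * δ := by nlinarith
      have i1 : α * p + β * q ≤ p * q := by
        have : (α * p + β * q : ℝ) ≤ p * q := by linarith
        exact_mod_cast this
      have i2 : p * q < α * p + β * q + 1 := by
        have : (p * q : ℝ) < α * p + β * q + 1 := by linarith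
        exact_mod_cast this
      have i3 : α * p + β * q = p * q := by omega
      have i4 : (α * p + β * q : ℝ) = p * q := by exact_mod_cast i3
      have : (α : ℝ) * δ = q * δ := by linarith
      have := mul_right_cancel₀ hδ.ne' this
      rw [this] at i4
      have : (β : ℝ) * q = 0 := by linarith
      have := (mul_eq_zero.1 this).resolve_right (by positivity)
      exact_mod_cast this
    · intro c e hc hcp h
      refine skew_coprime hcop.symm hc hcp ?_
      have hcq : (c : ℝ) ≤ q := by exact_mod_cast hcp.le
      have : (c : ℝ) * δ < 1 := by nlinarith
      have : (c * p : ℝ) < e * q + 1 := by linarith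
      have : c * p < e * q + 1 := by exact_mod_cast this
      omega
end

section
/- Let p, q be coprime positive integers, let n ≥ 2, and let a₃,…,aₙ be real numbers with a_s > p·q for 3 ≤ s ≤ n. Then there exists δ₀ > 0 such that for every real δ with 0 < δ < δ₀ and each sign ε ∈ {+1, −1}, setting a = (q, p + ε·δ, a₃,…,aₙ), the tuple (p, q, 1, …, 1) ∈ ℤ_{≥1}ⁿ is the unique tuple (i₁,…,iₙ) of positive integers with i₁+⋯+iₙ = n + p + q − 2 maximizing min_{1≤s≤n} a_s·i_s; that is, Δ^a_{p+q−1} = (p, q, 1, …, 1). -/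
/-- For coprime `p, q ≥ 1`, `a₃,…,aₙ > pq`, and all sufficiently small `δ > 0`,
setting `a = (q, p ± δ, a₃,…,aₙ)`, the tuple `(p, q, 1, …, 1)` is the unique tuple
`(i₁,…,iₙ)` of positive integers with `i₁+⋯+iₙ = n + p + q − 2` maximizing
`min_{1≤s≤n} a_s·i_s`; that is, `Δ^a_{p+q−1} = (p, q, 1, …, 1)`. -/
theorem Delta_eq_p_q_ones
    (p q : ℕ) (hp : 0 < p) (hq : 0 < q) (hcop : Nat.Coprime p q)
    (n : ℕ) (hn : 2 ≤ n) (rest : Fin n → ℝ)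
    (hrest : ∀ s : Fin n, 2 ≤ (s : ℕ) → ((p : ℝ) * q) < rest s) :
    ∃ δ₀ : ℝ, 0 < δ₀ ∧ ∀ δ : ℝ, 0 < δ → δ < δ₀ → ∀ ε : ℝ, ε = 1 ∨ ε = -1 →
      -- the weight tuple a = (q, p + ε·δ, a₃, …, aₙ)
      ∀ a : Fin n → ℝ,
        (a = fun s : Fin n => if (s : ℕ) = 0 then (q : ℝ)
          else if (s : ℕ) = 1 then (p : ℝ) + ε * δ else rest s) →
      -- the candidate tuple m0 = (p, q, 1, …, 1)
      ∀ m0 : Fin n → ℕ,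
        (m0 = fun s : Fin n => if (s : ℕ) = 0 then p
          else if (s : ℕ) = 1 then q else 1) →
      -- m0 is feasible ...
      ((∀ s, 1 ≤ m0 s) ∧ (∑ s, m0 s) = n + (p + q) - 2 ∧
      -- ... and any other feasible tuple gives a strictly smaller min
      ∀ i : Fin n → ℕ, (∀ s, 1 ≤ i s) → (∑ s, i s) = n + (p + q) - 2 → i ≠ m0 →
        sInf (Set.range fun s => a s * (i s : ℝ)) <
          sInf (Set.range fun s => a s * (m0 s : ℝ))) := by
  have hq' : (1 : ℝ) ≤ q := by exact_mod_cast hq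
  have hp' : (1 : ℝ) ≤ p := by exact_mod_cast hp
  refine ⟨1 / q, by positivity, ?_⟩
  intro δ hδ hδ' ε hε a ha m0 hm0
  have hδq : δ * q < 1 := by rwa [lt_div_iff₀ (by linarith)] at hδ'
  have hδ1 : δ < 1 := by nlinarith
  obtain ⟨m, rfl⟩ : ∃ m, n = m + 2 := ⟨n - 2, by omega⟩
  have hm1 : ∀ s, 1 ≤ m0 s := by
    intro s
    rw [hm0]
    dsimp only
    split_ifs <;> omega
  have hsum : (∑ s, m0 s) = m + 2 + (p + q) - 2 := by
    rw [hm0, Fin.sum_univ_succ, Fin.sum_univ_succ]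
    simp
    omega
  refine ⟨hm1, hsum, ?_⟩
  intro i hi hisum hne
  have key : i 0 < p ∨ i 1 < q := by
    by_contra! hcon
    apply hne
    have hle : ∀ s ∈ Finset.univ, m0 s ≤ i s := by
      intro s _
      rw [hm0]
      dsimp only
      split_ifs with h0 h1
      · have : s = 0 := Fin.ext h0
        rw [this]; exact hcon.1
      · have : s = 1 := Fin.ext (by simpa using h1)
        rw [this]; exact hcon.2
      · exact hi s
    have := (Finset.sum_eq_sum_iff_of_le hle).1 (hsum.trans hisum.symm)
    funext s
    exact (this s (Finset.mem_univ s)).symm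
  have ha0 : a 0 = q := by rw [ha]; simp
  have ha1 : a 1 = p + ε * δ := by rw [ha]; simp
  have hmem : sInf (Set.range fun s => a s * (m0 s : ℝ)) ∈
      Set.range fun s => a s * (m0 s : ℝ) :=
    Set.Nonempty.csInf_mem (Set.range_nonempty _) (Set.finite_range _)
  obtain ⟨s, hs⟩ := hmem
  rw [← hs]
  have hub : ∀ t, sInf (Set.range fun s => a s * (i s : ℝ)) ≤ a t * i t := fun t =>
    csInf_le (Set.finite_range _).bddBelow ⟨t, rfl⟩
  have hval : (p : ℝ) * q ≤ a s * m0 s ∨ (p + ε * δ) * q ≤ a s * m0 s := by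
    rw [ha, hm0]
    dsimp only
    split_ifs with h0 h1
    · left; linarith
    · right; exact le_rfl
    · left
      have := hrest s (by omega)
      push_cast
      linarith
  rcases key with h | h
  · refine (hub 0).trans_lt ?_
    rw [ha0]
    have h' : (i 0 : ℝ) + 1 ≤ p := by exact_mod_cast h
    have h2 : (q : ℝ) * i 0 ≤ p * q - 1 := by nlinarith
    rcases hval with hv | hv
    · linarith
    · rcases hε with rfl | rfl <;> nlinarith
  · refine (hub 1).trans_lt ?_
    rw [ha1]
    have h' : (i 1 : ℝ) + 1 ≤ q := by exact_mod_cast h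
    have hpos : 0 < p + ε * δ := by rcases hε with rfl | rfl <;> linarith
    have h2 : (p + ε * δ) * i 1 ≤ (p + ε * δ) * (q - 1) :=
      mul_le_mul_of_nonneg_left (by linarith) hpos.le
    rcases hval with hv | hv
    · rcases hε with rfl | rfl <;> nlinarith
    · nlinarith
end

section
/- Let p, q be coprime positive integers, let k ≥ 2 be an integer, and let (p₁,q₁),…,(p_k,q_k) be pairs of positive integers. Suppose that for all positive real numbers a, b one has Σ_{i=1}^k min(a·p_i, b·q_i) ≥ min(a·p, b·q). Then Σ_{i=1}^k (p_i + q_i) ≥ p + q + 1. -/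
/-- If `gcd(p,q) = 1` and the pairs `(p₁,q₁),…,(p_k,q_k)` of positive integers
(`k ≥ 2`) satisfy `Σ_i min(a·p_i, b·q_i) ≥ min(a·p, b·q)` for all `a, b > 0`,
then `Σ_i (p_i + q_i) ≥ p + q + 1`. -/
theorem sum_ge_succ_of_weighted_min
    (p q : ℕ) (hp : 0 < p) (hq : 0 < q) (hcop : Nat.Coprime p q)
    (k : ℕ) (hk : 2 ≤ k) (pp qq : Fin k → ℕ)
    (hpp : ∀ i, 1 ≤ pp i) (hqq : ∀ i, 1 ≤ qq i)
    (h : ∀ a b : ℝ, 0 < a → 0 < b →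
      min (a * p) (b * q) ≤ ∑ i, min (a * pp i) (b * qq i)) :
    p + q + 1 ≤ ∑ i, (pp i + qq i) := by
  have h1 : p * q ≤ ∑ i, min (q * pp i) (p * qq i) := by
    have := h q p (by exact_mod_cast hq) (by exact_mod_cast hp)
    rw [mul_comm (q : ℝ) p, min_self] at this
    exact_mod_cast this
  have hA : ∑ i, min (q * pp i) (p * qq i) ≤ q * ∑ i, pp i := by
    rw [Finset.mul_sum]
    exact Finset.sum_le_sum fun i _ => min_le_left _ _
  have hB : ∑ i, min (q * pp i) (p * qq i) ≤ p * ∑ i, qq i := by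
    rw [Finset.mul_sum]
    exact Finset.sum_le_sum fun i _ => min_le_right _ _
  have hP : p ≤ ∑ i, pp i := by
    refine Nat.le_of_mul_le_mul_left ?_ hq
    rw [mul_comm q p]
    exact h1.trans hA
  have hQ : q ≤ ∑ i, qq i := Nat.le_of_mul_le_mul_left (h1.trans hB) hp
  rw [Finset.sum_add_distrib]
  by_contra hcon
  have hP' : ∑ i, pp i = p := by omega
  have hQ' : ∑ i, qq i = q := by omega
  have eA : ∑ i, min (q * pp i) (p * qq i) = ∑ i, q * pp i := by
    rw [← Finset.mul_sum]
    refine le_antisymm hA ?_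
    rw [hP', mul_comm]
    exact h1
  have eB : ∑ i, min (q * pp i) (p * qq i) = ∑ i, p * qq i := by
    rw [← Finset.mul_sum]
    refine le_antisymm hB ?_
    rw [hQ']
    exact h1
  have fA := (Finset.sum_eq_sum_iff_of_le (fun i _ => min_le_left _ _)).1 eA
  have fB := (Finset.sum_eq_sum_iff_of_le (fun i _ => min_le_right _ _)).1 eB
  have hle : ∀ i, p ≤ pp i := by
    intro i
    have e : q * pp i = p * qq i :=
      (fA i (Finset.mem_univ i)).symm.trans (fB i (Finset.mem_univ i))
    exact Nat.le_of_dvd (hpp i) (hcop.dvd_of_dvd_mul_left ⟨_, e⟩)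
  have hs := Finset.card_nsmul_le_sum Finset.univ pp p (fun i _ => hle i)
  rw [Finset.card_univ, Fintype.card_fin, smul_eq_mul, hP'] at hs
  nlinarith
end

section
/- Let (a_j)_{j≥1} be the sequence of integers defined by the recursion a_{j+6} = 6·a_{j+3} − a_j with initial values a₁ = a₂ = a₃ = a₄ = 1, a₅ = 2, a₆ = 4. Then for every j ≥ 1: (i) gcd(a_{j+3}, a_j) = 1; (ii) the quantity a_{j+3}² − 6·a_{j+3}·a_j + a_j² + 8 is the square of an integer t_j with t_j ∈ {1, 2} (in particular a_{j+3}² − 6·a_{j+3}·a_j + a_j² < 0, so a_{j+3}/a_j < 3 + 2√2); (iii) the numbers d_j := (3·a_{j+3} + 3·a_j + (−1)^{j+1}·t_j)/8 and m_j := (a_{j+3} + a_j + 3·(−1)^{j+1}·t_j)/8 are integers with d_j ≥ 1 and m_j ≥ 0; and (iv) these satisfy 3·d_j − m_j = a_{j+3} + a_j and d_j² − m_j² = a_{j+3}·a_j − 1. -/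
/-- The sequence `a₁ = a₂ = a₃ = a₄ = 1, a₅ = 2, a₆ = 4`, with
`a_{j+6} = 6·a_{j+3} − a_j` (indexed so that `seqA j = a_j` for `j ≥ 1`). -/
def seqA : ℕ → ℤ
  | 0 => 1
  | 1 => 1
  | 2 => 1
  | 3 => 1
  | 4 => 1
  | 5 => 2
  | 6 => 4
  | (j + 7) => 6 * seqA (j + 4) - seqA (j + 1)

lemma seqA_inv : ∀ j : ℕ, ∃ t m : ℤ, (t = 1 ∨ t = 2) ∧
    1 ≤ seqA (j + 1) ∧ seqA (j + 1) ≤ seqA (j + 4) ∧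
    IsCoprime (seqA (j + 4)) (seqA (j + 1)) ∧
    t ^ 2 = (seqA (j + 4)) ^ 2 - 6 * seqA (j + 4) * seqA (j + 1) + (seqA (j + 1)) ^ 2 + 8 ∧
    8 * m = seqA (j + 4) + seqA (j + 1) + 3 * ((-1 : ℤ) ^ j * t) ∧ 0 ≤ m
  | 0 => ⟨2, 1, by simp [seqA, isCoprime_one_right]⟩
  | 1 => ⟨1, 0, by simp [seqA, isCoprime_one_right]⟩
  | 2 => ⟨1, 1, by simp [seqA, isCoprime_one_right]⟩
  | (j + 3) => by
    obtain ⟨t, m, ht, hx, hxy, hc, hq, hm, hm0⟩ := seqA_inv j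
    have e : seqA (j + 3 + 4) = 6 * seqA (j + 4) - seqA (j + 1) := by
      rw [show j + 3 + 4 = j + 7 from rfl, seqA]
    have e2 : seqA (j + 3 + 1) = seqA (j + 4) := rfl
    have hp : (-1 : ℤ) ^ (j + 3) = - (-1) ^ j := by ring
    rw [e, e2, hp]
    refine ⟨t, seqA (j + 4) - m, ht, by omega, by omega, ?_, ?_, ?_, ?_⟩
    · obtain ⟨a, b, hab⟩ := hc
      exact ⟨-b, a + 6 * b, by linear_combination hab⟩
    · linear_combination hq
    · linear_combination -hm
    · rcases neg_one_pow_eq_or ℤ j with h | h <;> rw [h] at hm <;> omega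

/-- Arithmetic facts about the sequence `(a_j)` underlying the classification of
index zero unicuspidal rational curves in the first Hirzebruch surface:
(i) `gcd(a_{j+3}, a_j) = 1`;
(ii) `a_{j+3}² − 6·a_{j+3}·a_j + a_j² + 8 = t_j²` with `t_j ∈ {1,2}`, and in
particular `a_{j+3}² − 6·a_{j+3}·a_j + a_j² < 0`, so `a_{j+3}/a_j < 3 + 2√2`;
(iii) `d_j = (3a_{j+3} + 3a_j + (−1)^{j+1} t_j)/8` and
`m_j = (a_{j+3} + a_j + 3(−1)^{j+1} t_j)/8` are integers with `d_j ≥ 1`, `m_j ≥ 0`;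
(iv) `3d_j − m_j = a_{j+3} + a_j` and `d_j² − m_j² = a_{j+3}·a_j − 1`. -/
theorem seqA_arithmetic :
    ∀ j : ℕ, 1 ≤ j →
      Int.gcd (seqA (j + 3)) (seqA j) = 1 ∧
      ∃ t : ℤ, 0 < t ∧
        t ^ 2 = (seqA (j + 3)) ^ 2 - 6 * seqA (j + 3) * seqA j + (seqA j) ^ 2 + 8 ∧
        (t = 1 ∨ t = 2) ∧
        (seqA (j + 3)) ^ 2 - 6 * seqA (j + 3) * seqA j + (seqA j) ^ 2 < 0 ∧
        ((seqA (j + 3) : ℝ) / (seqA j : ℝ) < 3 + 2 * Real.sqrt 2) ∧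
        ∃ d m : ℤ,
          8 * d = 3 * seqA (j + 3) + 3 * seqA j + (-1 : ℤ) ^ (j + 1) * t ∧
          8 * m = seqA (j + 3) + seqA j + 3 * (-1 : ℤ) ^ (j + 1) * t ∧
          1 ≤ d ∧ 0 ≤ m ∧
          3 * d - m = seqA (j + 3) + seqA j ∧
          d ^ 2 - m ^ 2 = seqA (j + 3) * seqA j - 1 := by
  intro j hj
  obtain ⟨k, rfl⟩ : ∃ k, j = k + 1 := ⟨j - 1, by omega⟩
  obtain ⟨t, m, ht, hx, hxy, hc, hq, hm, hm0⟩ := seqA_inv k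
  rw [show k + 1 + 3 = k + 4 from rfl]
  have hp : (-1 : ℤ) ^ (k + 1 + 1) = (-1) ^ k := by ring
  have hs : ((-1 : ℤ) ^ k * t) ^ 2 = t ^ 2 := by
    rcases neg_one_pow_eq_or ℤ k with h | h <;> rw [h] <;> ring
  rw [hp]
  have hneg : (seqA (k + 4)) ^ 2 - 6 * seqA (k + 4) * seqA (k + 1) + (seqA (k + 1)) ^ 2 < 0 := by
    rcases ht with rfl | rfl <;> linarith
  have hd : 1 ≤ 3 * m - (-1) ^ k * t := by
    rcases neg_one_pow_eq_or ℤ k with h | h <;> rw [h] at hm ⊢ <;> omega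
  refine ⟨Int.isCoprime_iff_gcd_eq_one.mp hc, t, by omega, hq, ht, hneg, ?_,
    3 * m - (-1) ^ k * t, m, ?_, ?_, hd, hm0, ?_, ?_⟩
  · have hxr : (1 : ℝ) ≤ seqA (k + 1) := by exact_mod_cast hx
    have hnr : (seqA (k + 4) : ℝ) ^ 2 - 6 * seqA (k + 4) * seqA (k + 1) +
      (seqA (k + 1) : ℝ) ^ 2 < 0 := by exact_mod_cast hneg
    rw [div_lt_iff₀ (by linarith)]
    have h2 : Real.sqrt 2 ^ 2 = 2 := Real.sq_sqrt (by norm_num)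
    have h0 := Real.sqrt_nonneg 2
    have key : (seqA (k + 4) : ℝ) - 3 * seqA (k + 1) < 2 * Real.sqrt 2 * seqA (k + 1) := by
      apply lt_of_pow_lt_pow_left₀ 2 (by positivity)
      rw [mul_pow, mul_pow, h2]
      linarith
    linarith
  · linear_combination 3 * hm
  · linear_combination hm
  · linear_combination hm
  · rw [← hs] at hq
    generalize (-1 : ℤ) ^ k * t = s at *
    generalize seqA (k + 4) = y at *
    obtain rfl : y = 8 * m - 3 * s - seqA (k + 1) := by linarith
    have : (8 : ℤ) ≠ 0 := by norm_num
    apply mul_left_cancel₀ this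
    linear_combination -hq
end
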